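/- (Star with an internal node among the four) Let X_1, X_2, X_3, X_4 be ±1-valued random variables on a standard Borel probability space with Var(X_l) > 0 for all l, such that for all distinct j, k ∈ {2, 3, 4}, X_j and X_k are conditionally independent given the σ-algebra generated by X_1. Let X_l^e = ε_l X_l be noisy versions, where ε_1, …, ε_4 are ±1-valued with P(ε_l = −1) = q_l ∈ [0, 1/2) and ε_1, …, ε_4, (X_1, …, X_4) are mutually independent, and write Σ'_{i,j} = Cov(X_i^e, X_j^e). Then Σ'_{1,3}·Σ'_{2,4} = Σ'_{1,4}·Σ'_{2,3} = Σ'_{1,2}·Σ'_{3,4}. -/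

import Mathlib

open MeasureTheory ProbabilityTheory

/-- Covariance `Cov(X,Y) = E[XY] - E[X]E[Y]`. -/
noncomputable def cov {Ω : Type*} [MeasurableSpace Ω] (μ : Measure Ω) (X Y : Ω → ℝ) : ℝ :=
  (∫ ω, X ω * Y ω ∂μ) - (∫ ω, X ω ∂μ) * (∫ ω, Y ω ∂μ)

/-- Variance `Var(X) = Cov(X,X)`. -/
noncomputable def var {Ω : Type*} [MeasurableSpace Ω] (μ : Measure Ω) (X : Ω → ℝ) : ℝ :=
  cov μ X X

/-!
A function of a two-valued `X₁` is affine in `X₁`, so each leaf satisfies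
`E[X_j | X₁] = α_j + β_j X₁`. Hence `Cov(X₁, X_j) = β_j Var X₁`, while conditional independence
makes `Cov(X_j, X_k) = Cov(E[X_j | X₁], E[X_k | X₁]) = β_j β_k Var X₁`. All three products of
clean covariances are therefore `β₂ β₃ β₄ (Var X₁)²`, and independent multiplicative noise scales
each of them by the same factor `E[ε₁] E[ε₂] E[ε₃] E[ε₄]`.
-/

section CondExp

variable {Ω : Type*} {m mΩ : MeasurableSpace Ω} {μ : Measure Ω} {X Y Z : Ω → ℝ}

lemma ae_indepFun_condExpKernel [StandardBorelSpace Ω] [IsFiniteMeasure μ] {hm : m ≤ mΩ}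
    (hY : Measurable Y) (hZ : Measurable Z) (hYZ : CondIndepFun m hm Y Z μ) :
    ∀ᵐ ω ∂μ, IndepFun Y Z (condExpKernel μ m ω) := by
  have hmap := (condIndepFun_iff_map_prod_eq_prod_map_map hY hZ).1 hYZ
  filter_upwards [ae_of_ae_trim hm hmap] with ω hω
  rw [indepFun_iff_map_prod_eq_prod_map_map hY.aemeasurable hZ.aemeasurable]
  rwa [Kernel.map_apply _ (hY.prodMk hZ), Kernel.prod_apply, Kernel.map_apply _ hY,
    Kernel.map_apply _ hZ] at hω

lemma condExp_mul_of_condIndepFun [StandardBorelSpace Ω] [IsFiniteMeasure μ] {hm : m ≤ mΩ}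
    (hY : Measurable Y) (hZ : Measurable Z) (hYi : Integrable Y μ) (hZi : Integrable Z μ)
    (hYZi : Integrable (Y * Z) μ) (hYZ : CondIndepFun m hm Y Z μ) :
    μ[Y * Z | m] =ᵐ[μ] μ[Y | m] * μ[Z | m] := by
  filter_upwards [condExp_ae_eq_integral_condExpKernel hm hYZi,
    condExp_ae_eq_integral_condExpKernel hm hYi, condExp_ae_eq_integral_condExpKernel hm hZi,
    ae_indepFun_condExpKernel hY hZ hYZ] with ω hmul hYω hZω hindep
  rw [hmul, Pi.mul_apply, hYω, hZω]
  exact hindep.integral_mul_eq_mul_integral hY.aestronglyMeasurable hZ.aestronglyMeasurable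

variable [IsProbabilityMeasure μ]

lemma covariance_condExp_right (hm : m ≤ mΩ) (hXm : AEStronglyMeasurable[m] X μ)
    (hX : MemLp X 2 μ) (hY : MemLp Y 2 μ) : cov[X, μ[Y | m]; μ] = cov[X, Y; μ] := by
  have hpull : μ[X * Y | m] =ᵐ[μ] X * μ[Y | m] :=
    condExp_mul_of_aestronglyMeasurable_left hXm (hX.integrable_mul hY)
      (hY.integrable one_le_two)
  rw [covariance_eq_sub hX (hY.condExp one_le_two), covariance_eq_sub hX hY,
    integral_condExp hm, ← integral_congr_ae hpull, integral_condExp hm]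

lemma covariance_condExp_condExp_of_condIndepFun [StandardBorelSpace Ω] {hm : m ≤ mΩ}
    (hYm : Measurable Y) (hZm : Measurable Z) (hY : MemLp Y 2 μ) (hZ : MemLp Z 2 μ)
    (hYZ : CondIndepFun m hm Y Z μ) : cov[μ[Y | m], μ[Z | m]; μ] = cov[Y, Z; μ] := by
  have hmul : μ[Y * Z | m] =ᵐ[μ] μ[Y | m] * μ[Z | m] :=
    condExp_mul_of_condIndepFun hYm hZm (hY.integrable one_le_two) (hZ.integrable one_le_two)
      (hY.integrable_mul hZ) hYZ
  rw [covariance_eq_sub (hY.condExp one_le_two) (hZ.condExp one_le_two), covariance_eq_sub hY hZ,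
    ← integral_congr_ae hmul, integral_condExp hm, integral_condExp hm, integral_condExp hm]

end CondExp

section Regression

variable {Ω : Type*} [MeasurableSpace Ω] {μ : Measure Ω} {X Y Z : Ω → ℝ} {β γ : ℝ}

lemma covariance_congr_ae {X' Y' : Ω → ℝ} (hX : X =ᵐ[μ] X') (hY : Y =ᵐ[μ] Y') :
    cov[X, Y; μ] = cov[X', Y'; μ] := by
  rw [covariance, covariance, integral_congr_ae hX, integral_congr_ae hY]
  refine integral_congr_ae ?_
  filter_upwards [hX, hY] with ω hXω hYω
  rw [hXω, hYω]

/-- The regression of `Y` on `X` is affine with slope `β`: almost surely `E[Y | X] = α + β X` for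
some constant `α`. Meaningful for integrable `Y`, since `μ[Y | m] = 0` otherwise. -/
def HasRegressionSlope (μ : Measure Ω) (X Y : Ω → ℝ) (β : ℝ) : Prop :=
  ∃ α : ℝ, μ[Y | MeasurableSpace.comap X inferInstance] =ᵐ[μ] fun ω => α + β * X ω

lemma ae_eq_affine_of_stronglyMeasurable_comap {g : Ω → ℝ} {a b : ℝ}
    (hX : ∀ᵐ ω ∂μ, X ω = a ∨ X ω = b)
    (hg : StronglyMeasurable[MeasurableSpace.comap X inferInstance] g) :
    ∃ α β : ℝ, g =ᵐ[μ] fun ω => α + β * X ω := by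
  obtain ⟨h, -, rfl⟩ := hg.exists_eq_measurable_comp
  -- For `a = b` the slope is the junk value `0`, which is what a constant `X` requires.
  refine ⟨h a - (h b - h a) / (b - a) * a, (h b - h a) / (b - a), ?_⟩
  filter_upwards [hX] with ω hω
  rcases hω with hω | hω <;> simp only [Function.comp_apply, hω]
  · ring
  · rcases eq_or_ne b a with rfl | hba
    · ring
    · field_simp [sub_ne_zero.2 hba]
      ring

lemma exists_hasRegressionSlope_of_ae_eq_or_eq {a b : ℝ} (hX : ∀ᵐ ω ∂μ, X ω = a ∨ X ω = b)
    (Y : Ω → ℝ) : ∃ β, HasRegressionSlope μ X Y β := by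
  obtain ⟨α, β, h⟩ := ae_eq_affine_of_stronglyMeasurable_comap hX
    (stronglyMeasurable_condExp (f := Y))
  exact ⟨β, α, h⟩

namespace HasRegressionSlope

variable [IsProbabilityMeasure μ]

lemma covariance_eq (hβ : HasRegressionSlope μ X Y β) (hXm : Measurable X) (hX : MemLp X 2 μ)
    (hY : MemLp Y 2 μ) : cov[X, Y; μ] = β * Var[X; μ] := by
  obtain ⟨α, hα⟩ := hβ
  have hXσ : AEStronglyMeasurable[MeasurableSpace.comap X inferInstance] X μ :=
    (comap_measurable X).aestronglyMeasurable
  calc cov[X, Y; μ]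
      = cov[X, μ[Y | MeasurableSpace.comap X inferInstance]; μ] :=
        (covariance_condExp_right hXm.comap_le hXσ hX hY).symm
    _ = cov[X, fun ω => α + β * X ω; μ] := covariance_congr_ae .rfl hα
    _ = β * Var[X; μ] := by
        rw [covariance_const_add_right ((hX.integrable one_le_two).const_mul β),
          covariance_const_mul_right, covariance_self hXm.aemeasurable]

lemma covariance_eq_of_condIndepFun [StandardBorelSpace Ω] (hβ : HasRegressionSlope μ X Y β)
    (hγ : HasRegressionSlope μ X Z γ) (hXm : Measurable X) (hYm : Measurable Y)
    (hZm : Measurable Z) (hX : MemLp X 2 μ) (hY : MemLp Y 2 μ) (hZ : MemLp Z 2 μ)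
    (hYZ : CondIndepFun (MeasurableSpace.comap X inferInstance) hXm.comap_le Y Z μ) :
    cov[Y, Z; μ] = β * γ * Var[X; μ] := by
  obtain ⟨α, hα⟩ := hβ
  obtain ⟨δ, hδ⟩ := hγ
  have hXi : Integrable X μ := hX.integrable one_le_two
  calc cov[Y, Z; μ]
      = cov[μ[Y | MeasurableSpace.comap X inferInstance],
          μ[Z | MeasurableSpace.comap X inferInstance]; μ] :=
        (covariance_condExp_condExp_of_condIndepFun hYm hZm hY hZ hYZ).symm
    _ = cov[fun ω => α + β * X ω, fun ω => δ + γ * X ω; μ] := covariance_congr_ae hα hδ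
    _ = β * γ * Var[X; μ] := by
        rw [covariance_const_add_left (hXi.const_mul β),
          covariance_const_add_right (hXi.const_mul γ), covariance_const_mul_left,
          covariance_const_mul_right, covariance_self hXm.aemeasurable, mul_assoc]

end HasRegressionSlope

end Regression

section Star

variable {Ω : Type*} [MeasurableSpace Ω] {μ : Measure Ω}

lemma memLp_of_ae_eq_or_eq [IsFiniteMeasure μ] {X : Ω → ℝ} {a b : ℝ} {p : ENNReal}
    (hX : AEStronglyMeasurable X μ) (hab : ∀ᵐ ω ∂μ, X ω = a ∨ X ω = b) : MemLp X p μ := by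
  refine MemLp.of_bound hX (max |a| |b|) ?_
  filter_upwards [hab] with ω hω
  rcases hω with hω | hω <;> simp [hω]

lemma cov_eq_covariance [IsProbabilityMeasure μ] {X Y : Ω → ℝ} (hX : MemLp X 2 μ)
    (hY : MemLp Y 2 μ) : cov μ X Y = cov[X, Y; μ] :=
  (covariance_eq_sub hX hY).symm

lemma cov_mul_mul_of_indepFun {ε δ X Y : Ω → ℝ}
    (hε : AEStronglyMeasurable ε μ) (hδ : AEStronglyMeasurable δ μ)
    (hX : AEStronglyMeasurable X μ) (hY : AEStronglyMeasurable Y μ) (hεδ : IndepFun ε δ μ)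
    (hindep : IndepFun (fun ω => (ε ω, δ ω)) (fun ω => (X ω, Y ω)) μ) :
    cov μ (fun ω => ε ω * X ω) (fun ω => δ ω * Y ω) = μ[ε] * μ[δ] * cov μ X Y := by
  have hεX : ∫ ω, ε ω * X ω ∂μ = μ[ε] * μ[X] :=
    (hindep.comp measurable_fst measurable_fst).integral_fun_mul_eq_mul_integral hε hX
  have hδY : ∫ ω, δ ω * Y ω ∂μ = μ[δ] * μ[Y] :=
    (hindep.comp measurable_snd measurable_snd).integral_fun_mul_eq_mul_integral hδ hY
  have hεδXY : ∫ ω, ε ω * X ω * (δ ω * Y ω) ∂μ = μ[ε] * μ[δ] * ∫ ω, X ω * Y ω ∂μ := by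
    simp_rw [mul_mul_mul_comm (ε _) (X _)]
    rw [← hεδ.integral_fun_mul_eq_mul_integral hε hδ]
    exact (hindep.comp measurable_mul measurable_mul).integral_fun_mul_eq_mul_integral
      (hε.mul hδ) (hX.mul hY)
  simp only [cov, hεX, hδY, hεδXY]
  ring

variable [StandardBorelSpace Ω] [IsProbabilityMeasure μ] {X1 X2 X3 X4 : Ω → ℝ}

lemma cov_mul_cov_eq_of_star (hX1 : Measurable X1) (hX2 : Measurable X2) (hX3 : Measurable X3)
    (hX4 : Measurable X4) (hreg2 : ∃ β, HasRegressionSlope μ X1 X2 β)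
    (hreg3 : ∃ β, HasRegressionSlope μ X1 X3 β) (hreg4 : ∃ β, HasRegressionSlope μ X1 X4 β)
    (hL1 : MemLp X1 2 μ) (hL2 : MemLp X2 2 μ) (hL3 : MemLp X3 2 μ) (hL4 : MemLp X4 2 μ)
    (hci23 : CondIndepFun (MeasurableSpace.comap X1 inferInstance) hX1.comap_le X2 X3 μ)
    (hci24 : CondIndepFun (MeasurableSpace.comap X1 inferInstance) hX1.comap_le X2 X4 μ)
    (hci34 : CondIndepFun (MeasurableSpace.comap X1 inferInstance) hX1.comap_le X3 X4 μ) :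
    cov μ X1 X3 * cov μ X2 X4 = cov μ X1 X4 * cov μ X2 X3 ∧
      cov μ X1 X4 * cov μ X2 X3 = cov μ X1 X2 * cov μ X3 X4 := by
  obtain ⟨β2, h2⟩ := hreg2
  obtain ⟨β3, h3⟩ := hreg3
  obtain ⟨β4, h4⟩ := hreg4
  rw [cov_eq_covariance hL1 hL2, cov_eq_covariance hL1 hL3, cov_eq_covariance hL1 hL4,
    cov_eq_covariance hL2 hL3, cov_eq_covariance hL2 hL4, cov_eq_covariance hL3 hL4,
    h2.covariance_eq hX1 hL1 hL2, h3.covariance_eq hX1 hL1 hL3, h4.covariance_eq hX1 hL1 hL4,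
    h2.covariance_eq_of_condIndepFun h3 hX1 hX2 hX3 hL1 hL2 hL3 hci23,
    h2.covariance_eq_of_condIndepFun h4 hX1 hX2 hX4 hL1 hL2 hL4 hci24,
    h3.covariance_eq_of_condIndepFun h4 hX1 hX3 hX4 hL1 hL3 hL4 hci34]
  constructor <;> ring

theorem star_internal_equality_general {ε1 ε2 ε3 ε4 : Ω → ℝ} (hX1 : Measurable X1)
    (hX2 : Measurable X2) (hX3 : Measurable X3) (hX4 : Measurable X4)
    (hreg2 : ∃ β, HasRegressionSlope μ X1 X2 β)
    (hreg3 : ∃ β, HasRegressionSlope μ X1 X3 β) (hreg4 : ∃ β, HasRegressionSlope μ X1 X4 β)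
    (hL1 : MemLp X1 2 μ) (hL2 : MemLp X2 2 μ) (hL3 : MemLp X3 2 μ) (hL4 : MemLp X4 2 μ)
    (hε1 : Integrable ε1 μ) (hε2 : Integrable ε2 μ) (hε3 : Integrable ε3 μ)
    (hε4 : Integrable ε4 μ)
    (hci23 : CondIndepFun (MeasurableSpace.comap X1 inferInstance) hX1.comap_le X2 X3 μ)
    (hci24 : CondIndepFun (MeasurableSpace.comap X1 inferInstance) hX1.comap_le X2 X4 μ)
    (hci34 : CondIndepFun (MeasurableSpace.comap X1 inferInstance) hX1.comap_le X3 X4 μ)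
    (hindep1 : IndepFun ε1 ε2 μ)
    (hindep2 : IndepFun (fun ω => (ε1 ω, ε2 ω)) ε3 μ)
    (hindep3 : IndepFun (fun ω => (ε1 ω, ε2 ω, ε3 ω)) ε4 μ)
    (hindep4 : IndepFun (fun ω => (ε1 ω, ε2 ω, ε3 ω, ε4 ω))
      (fun ω => (X1 ω, X2 ω, X3 ω, X4 ω)) μ) :
    cov μ (fun ω => ε1 ω * X1 ω) (fun ω => ε3 ω * X3 ω)
        * cov μ (fun ω => ε2 ω * X2 ω) (fun ω => ε4 ω * X4 ω)
      = cov μ (fun ω => ε1 ω * X1 ω) (fun ω => ε4 ω * X4 ω)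
        * cov μ (fun ω => ε2 ω * X2 ω) (fun ω => ε3 ω * X3 ω) ∧
    cov μ (fun ω => ε1 ω * X1 ω) (fun ω => ε4 ω * X4 ω)
        * cov μ (fun ω => ε2 ω * X2 ω) (fun ω => ε3 ω * X3 ω)
      = cov μ (fun ω => ε1 ω * X1 ω) (fun ω => ε2 ω * X2 ω)
        * cov μ (fun ω => ε3 ω * X3 ω) (fun ω => ε4 ω * X4 ω) := by
  have noise12 := cov_mul_mul_of_indepFun hε1.1 hε2.1 hX1.aestronglyMeasurable
    hX2.aestronglyMeasurable hindep1
    (hindep4.comp (φ := fun p => (p.1, p.2.1)) (ψ := fun p => (p.1, p.2.1))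
      (by fun_prop) (by fun_prop))
  have noise13 := cov_mul_mul_of_indepFun hε1.1 hε3.1 hX1.aestronglyMeasurable
    hX3.aestronglyMeasurable (hindep2.comp measurable_fst measurable_id)
    (hindep4.comp (φ := fun p => (p.1, p.2.2.1)) (ψ := fun p => (p.1, p.2.2.1))
      (by fun_prop) (by fun_prop))
  have noise14 := cov_mul_mul_of_indepFun hε1.1 hε4.1 hX1.aestronglyMeasurable
    hX4.aestronglyMeasurable (hindep3.comp measurable_fst measurable_id)
    (hindep4.comp (φ := fun p => (p.1, p.2.2.2)) (ψ := fun p => (p.1, p.2.2.2))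
      (by fun_prop) (by fun_prop))
  have noise23 := cov_mul_mul_of_indepFun hε2.1 hε3.1 hX2.aestronglyMeasurable
    hX3.aestronglyMeasurable (hindep2.comp measurable_snd measurable_id)
    (hindep4.comp (φ := fun p => (p.2.1, p.2.2.1)) (ψ := fun p => (p.2.1, p.2.2.1))
      (by fun_prop) (by fun_prop))
  have noise24 := cov_mul_mul_of_indepFun hε2.1 hε4.1 hX2.aestronglyMeasurable
    hX4.aestronglyMeasurable (hindep3.comp measurable_snd.fst measurable_id)
    (hindep4.comp (φ := fun p => (p.2.1, p.2.2.2)) (ψ := fun p => (p.2.1, p.2.2.2))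
      (by fun_prop) (by fun_prop))
  have noise34 := cov_mul_mul_of_indepFun hε3.1 hε4.1 hX3.aestronglyMeasurable
    hX4.aestronglyMeasurable (hindep3.comp measurable_snd.snd measurable_id)
    (hindep4.comp (φ := fun p => (p.2.2.1, p.2.2.2)) (ψ := fun p => (p.2.2.1, p.2.2.2))
      (by fun_prop) (by fun_prop))
  obtain ⟨clean13, clean14⟩ :=
    cov_mul_cov_eq_of_star hX1 hX2 hX3 hX4 hreg2 hreg3 hreg4 hL1 hL2 hL3 hL4 hci23 hci24 hci34
  rw [noise12, noise13, noise14, noise23, noise24, noise34]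
  constructor
  · linear_combination μ[ε1] * μ[ε2] * μ[ε3] * μ[ε4] * clean13
  · linear_combination μ[ε1] * μ[ε2] * μ[ε3] * μ[ε4] * clean14

end Star

/-- Star with an internal node among the four: if ±1-valued `X_1, X_2, X_3, X_4`
with positive variances are such that `X_j ⊥ X_k | σ(X_1)` for all distinct `j, k ∈ {2,3,4}`,
and `X_l^e = ε_l X_l` are noisy versions with flip probabilities `q_l ∈ [0, 1/2)`, where
`ε_1, …, ε_4, (X_1, …, X_4)` are mutually independent, then the noisy covariances satisfy
`Σ'_{1,3} Σ'_{2,4} = Σ'_{1,4} Σ'_{2,3} = Σ'_{1,2} Σ'_{3,4}`. -/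
theorem star_internal_equality {Ω : Type*} [MeasurableSpace Ω] [StandardBorelSpace Ω]
    (μ : Measure Ω) [IsProbabilityMeasure μ]
    (X1 X2 X3 X4 ε1 ε2 ε3 ε4 : Ω → ℝ) (q1 q2 q3 q4 : ℝ)
    (hX1 : Measurable X1) (hX2 : Measurable X2) (hX3 : Measurable X3) (hX4 : Measurable X4)
    (hε1 : Measurable ε1) (hε2 : Measurable ε2) (hε3 : Measurable ε3) (hε4 : Measurable ε4)
    (hX1pm : ∀ᵐ ω ∂μ, X1 ω = 1 ∨ X1 ω = -1)
    (hX2pm : ∀ᵐ ω ∂μ, X2 ω = 1 ∨ X2 ω = -1)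
    (hX3pm : ∀ᵐ ω ∂μ, X3 ω = 1 ∨ X3 ω = -1)
    (hX4pm : ∀ᵐ ω ∂μ, X4 ω = 1 ∨ X4 ω = -1)
    (hε1pm : ∀ᵐ ω ∂μ, ε1 ω = 1 ∨ ε1 ω = -1)
    (hε2pm : ∀ᵐ ω ∂μ, ε2 ω = 1 ∨ ε2 ω = -1)
    (hε3pm : ∀ᵐ ω ∂μ, ε3 ω = 1 ∨ ε3 ω = -1)
    (hε4pm : ∀ᵐ ω ∂μ, ε4 ω = 1 ∨ ε4 ω = -1)
    (hvar1 : 0 < var μ X1) (hvar2 : 0 < var μ X2)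
    (hvar3 : 0 < var μ X3) (hvar4 : 0 < var μ X4)
    -- star: `X_j ⊥ X_k | σ(X_1)` for all distinct `j, k ∈ {2, 3, 4}`:
    (hci23 : CondIndepFun (MeasurableSpace.comap X1 inferInstance) hX1.comap_le X2 X3 μ)
    (hci24 : CondIndepFun (MeasurableSpace.comap X1 inferInstance) hX1.comap_le X2 X4 μ)
    (hci34 : CondIndepFun (MeasurableSpace.comap X1 inferInstance) hX1.comap_le X3 X4 μ)
    (hci32 : CondIndepFun (MeasurableSpace.comap X1 inferInstance) hX1.comap_le X3 X2 μ)
    (hci42 : CondIndepFun (MeasurableSpace.comap X1 inferInstance) hX1.comap_le X4 X2 μ)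
    (hci43 : CondIndepFun (MeasurableSpace.comap X1 inferInstance) hX1.comap_le X4 X3 μ)
    -- flip probabilities:
    (hq1 : (μ {ω | ε1 ω = -1}).toReal = q1) (hq1' : 0 ≤ q1) (hq1'' : q1 < 1 / 2)
    (hq2 : (μ {ω | ε2 ω = -1}).toReal = q2) (hq2' : 0 ≤ q2) (hq2'' : q2 < 1 / 2)
    (hq3 : (μ {ω | ε3 ω = -1}).toReal = q3) (hq3' : 0 ≤ q3) (hq3'' : q3 < 1 / 2)
    (hq4 : (μ {ω | ε4 ω = -1}).toReal = q4) (hq4' : 0 ≤ q4) (hq4'' : q4 < 1 / 2)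
    -- mutual independence of `ε_1, ε_2, ε_3, ε_4, (X_1, X_2, X_3, X_4)`:
    (hindep1 : IndepFun ε1 ε2 μ)
    (hindep2 : IndepFun (fun ω => (ε1 ω, ε2 ω)) ε3 μ)
    (hindep3 : IndepFun (fun ω => (ε1 ω, ε2 ω, ε3 ω)) ε4 μ)
    (hindep4 : IndepFun (fun ω => (ε1 ω, ε2 ω, ε3 ω, ε4 ω))
      (fun ω => (X1 ω, X2 ω, X3 ω, X4 ω)) μ) :
    cov μ (fun ω => ε1 ω * X1 ω) (fun ω => ε3 ω * X3 ω)
        * cov μ (fun ω => ε2 ω * X2 ω) (fun ω => ε4 ω * X4 ω)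
      = cov μ (fun ω => ε1 ω * X1 ω) (fun ω => ε4 ω * X4 ω)
        * cov μ (fun ω => ε2 ω * X2 ω) (fun ω => ε3 ω * X3 ω) ∧
    cov μ (fun ω => ε1 ω * X1 ω) (fun ω => ε4 ω * X4 ω)
        * cov μ (fun ω => ε2 ω * X2 ω) (fun ω => ε3 ω * X3 ω)
      = cov μ (fun ω => ε1 ω * X1 ω) (fun ω => ε2 ω * X2 ω)
        * cov μ (fun ω => ε3 ω * X3 ω) (fun ω => ε4 ω * X4 ω) :=
  have memLp {X : Ω → ℝ} {p : ENNReal} (hX : Measurable X) (h : ∀ᵐ ω ∂μ, X ω = 1 ∨ X ω = -1) :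
      MemLp X p μ := memLp_of_ae_eq_or_eq hX.aestronglyMeasurable h
  have slope {Y : Ω → ℝ} : ∃ β, HasRegressionSlope μ X1 Y β :=
    exists_hasRegressionSlope_of_ae_eq_or_eq hX1pm Y
  star_internal_equality_general hX1 hX2 hX3 hX4 slope slope slope (memLp hX1 hX1pm)
    (memLp hX2 hX2pm) (memLp hX3 hX3pm) (memLp hX4 hX4pm) ((memLp hε1 hε1pm).integrable le_rfl)
    ((memLp hε2 hε2pm).integrable le_rfl) ((memLp hε3 hε3pm).integrable le_rfl)
    ((memLp hε4 hε4pm).integrable le_rfl) hci23 hci24 hci34 hindep1 hindep2 hindep3 hindep4
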